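/- Let (x,1) ∈ Fix(P_S ∘ T) and set r' = ‖(x,1) − T(x,1)‖. Then Fix(P_S ∘ T) = {(u,1) : u ∈ X and ‖T(u,1) − (u,1)‖ = r'}. In particular, ‖T z − z‖ takes the same value r' at every z ∈ Fix(P_S ∘ T). -/

import Mathlib

/-! Put `r = ‖z - T z‖`. Shrinking `T z` towards `0` would lower the objective if
`κ (T z) > ‖z - T z‖`, so `κ (T z) ≤ r` and `r` is the optimal value; by uniqueness `T z` is then
the projection of `z` onto the convex sublevel set `{κ ≤ r}`. If `z = (x, 1)` is a fixed point, then
`T z = (x, l)`, and the obtuse-angle inequality at `0` gives `0 ≤ l ≤ 1`, hence `l = 1 - r`. At an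
arbitrary `u` it says that the last coordinate of `u` is at most `1 - r` on `{κ ≤ r}`, or, after
rescaling, `r * sndE u ≤ (1 - r) * s` whenever `κ u ≤ s` (`slope_bound`). Applied to `T w` at a second
fixed point `w`, and with the roles exchanged, this shows that the two displacements agree.
Conversely, if `‖T (u, 1) - (u, 1)‖ = r`, then the last coordinate of `T (u, 1)` is at most `1 - r`,
which already accounts for the whole displacement, so `T (u, 1)` lies vertically below `(u, 1)`. -/

open scoped ENNReal RealInnerProductSpace Pointwise Topology
open Filter

noncomputable section

variable {X : Type*} [NormedAddCommGroup X] [InnerProductSpace ℝ X] [FiniteDimensional ℝ X]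

/-- The point `(x, t)` of the lifted space `E = X ×₂ ℝ` (Euclidean product). -/
def pt (x : X) (t : ℝ) : WithLp 2 (X × ℝ) := (WithLp.equiv 2 (X × ℝ)).symm (x, t)

/-- First (`X`-) coordinate of a point of the lifted space. -/
def fstE (z : WithLp 2 (X × ℝ)) : X := (WithLp.equiv 2 (X × ℝ) z).1

/-- Second (`ℝ`-) coordinate of a point of the lifted space. -/
def sndE (z : WithLp 2 (X × ℝ)) : ℝ := (WithLp.equiv 2 (X × ℝ) z).2

/-- Orthogonal projection `P_S` onto the affine subspace `S = X × {1}`. -/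
def PS (z : WithLp 2 (X × ℝ)) : WithLp 2 (X × ℝ) := pt (fstE z) 1

/-- A closed gauge: a convex, lower semicontinuous, positively homogeneous
function `κ : E → [0,∞]` on the lifted space. -/
def IsClosedGauge (κ : WithLp 2 (X × ℝ) → ℝ≥0∞) : Prop :=
  LowerSemicontinuous κ ∧
  (∀ z w : WithLp 2 (X × ℝ), ∀ a b : ℝ, 0 ≤ a → 0 ≤ b → a + b = 1 →
    κ (a • z + b • w) ≤ ENNReal.ofReal a * κ z + ENNReal.ofReal b * κ w) ∧
  (∀ t : ℝ, 0 ≤ t → ∀ z, κ (t • z) = ENNReal.ofReal t * κ z)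

/-- The objective `u ↦ max {κ(u), ‖z − u‖}` defining the polar proximal map. -/
def polarObj (κ : WithLp 2 (X × ℝ) → ℝ≥0∞) (z u : WithLp 2 (X × ℝ)) : ℝ≥0∞ :=
  max (κ u) (ENNReal.ofReal ‖z - u‖)

/-- `T` is the polar proximal map of `κ`: for every `z`, `T z` is the unique
minimizer of `u ↦ max {κ(u), ‖z − u‖}`. -/
def IsPolarProx (κ : WithLp 2 (X × ℝ) → ℝ≥0∞)
    (T : WithLp 2 (X × ℝ) → WithLp 2 (X × ℝ)) : Prop :=
  ∀ z, (∀ u, polarObj κ z (T z) ≤ polarObj κ z u) ∧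
    (∀ u, (∀ v, polarObj κ z u ≤ polarObj κ z v) → u = T z)

set_option linter.unusedSectionVars false

lemma norm_sq_E (z : WithLp 2 (X × ℝ)) : ‖z‖ ^ 2 = ‖fstE z‖ ^ 2 + (sndE z) ^ 2 := by
  have := WithLp.prod_norm_sq_eq_of_L2 z
  rw [this]
  simp [fstE, sndE]

lemma prodInner_eq (z w : WithLp 2 (X × ℝ)) :
    ⟪z, w⟫ = ⟪fstE z, fstE w⟫ + sndE z * sndE w := by
  rw [WithLp.prod_inner_apply]
  simp [fstE, sndE, mul_comm]

@[simp] lemma fstE_pt (x : X) (t : ℝ) : fstE (pt x t) = x := rfl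
@[simp] lemma sndE_pt (x : X) (t : ℝ) : sndE (pt x t) = t := rfl
@[simp] lemma fstE_sub (z w : WithLp 2 (X × ℝ)) : fstE (z - w) = fstE z - fstE w := rfl
@[simp] lemma sndE_sub (z w : WithLp 2 (X × ℝ)) : sndE (z - w) = sndE z - sndE w := rfl
@[simp] lemma sndE_smul (t : ℝ) (z : WithLp 2 (X × ℝ)) : sndE (t • z) = t * sndE z := rfl

lemma IsClosedGauge.map_zero {κ : WithLp 2 (X × ℝ) → ℝ≥0∞} (hκ : IsClosedGauge κ) : κ 0 = 0 := by
  simpa using hκ.2.2 0 le_rfl 0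

/-- Otherwise shrinking `T z` slightly towards `0` would strictly lower the objective. -/
lemma kappa_T_le {κ : WithLp 2 (X × ℝ) → ℝ≥0∞} (hκ : IsClosedGauge κ)
    {T : WithLp 2 (X × ℝ) → WithLp 2 (X × ℝ)} (hT : IsPolarProx κ T) (z : WithLp 2 (X × ℝ)) :
    κ (T z) ≤ ENNReal.ofReal ‖z - T z‖ := by
  by_contra! h
  have hfin : κ (T z) ≠ ⊤ := by
    have h0 := (hT z).1 0
    have : polarObj κ z 0 < ⊤ := by simp [polarObj, hκ.map_zero]
    exact (((le_max_left _ _).trans h0).trans_lt this).ne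
  obtain ⟨k, hk, hk'⟩ : ∃ k : ℝ, 0 ≤ k ∧ κ (T z) = ENNReal.ofReal k :=
    ⟨(κ (T z)).toReal, ENNReal.toReal_nonneg, (ENNReal.ofReal_toReal hfin).symm⟩
  rw [hk', ENNReal.ofReal_lt_ofReal_iff_of_nonneg (norm_nonneg _)] at h
  have hk0 : 0 < k := (norm_nonneg _).trans_lt h
  have hcont : Continuous fun t : ℝ => ‖z - t • T z‖ := by fun_prop
  have hev : ∀ᶠ t in 𝓝[<] (1 : ℝ), ‖z - t • T z‖ < k :=
    (hcont.tendsto' 1 _ (by simp)).mono_left nhdsWithin_le_nhds |>.eventually_lt_const h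
  have hpos : ∀ᶠ t in 𝓝[<] (1 : ℝ), 0 < t :=
    nhdsWithin_le_nhds (lt_mem_nhds one_pos)
  obtain ⟨t, ht, ht0, ht1⟩ := (hev.and (hpos.and self_mem_nhdsWithin)).exists
  have h1 := (le_max_left _ _).trans ((hT z).1 (t • T z))
  refine absurd h1 (not_le.2 ?_)
  rw [polarObj, hκ.2.2 t ht0.le, hk', ← ENNReal.ofReal_mul ht0.le]
  refine max_lt ?_ ?_
  · rw [ENNReal.ofReal_lt_ofReal_iff hk0]
    have ht1 : t < 1 := ht1
    nlinarith
  · rwa [ENNReal.ofReal_lt_ofReal_iff hk0]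

/-- The obtuse-angle characterization of `T z` as the projection of `z` onto `{κ ≤ ‖z - T z‖}`. -/
lemma obtuse_angle {κ : WithLp 2 (X × ℝ) → ℝ≥0∞} (hκ : IsClosedGauge κ)
    {T : WithLp 2 (X × ℝ) → WithLp 2 (X × ℝ)} (hT : IsPolarProx κ T) (z : WithLp 2 (X × ℝ))
    {u : WithLp 2 (X × ℝ)} (hu : κ u ≤ ENNReal.ofReal ‖z - T z‖) :
    ⟪z - T z, u - T z⟫ ≤ 0 := by
  have hle := kappa_T_le hκ hT z
  let K : Set (WithLp 2 (X × ℝ)) := {w | κ w ≤ ENNReal.ofReal ‖z - T z‖}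
  have hK : Convex ℝ K := by
    intro v hv w hw a b ha hb hab
    calc κ (a • v + b • w) ≤ ENNReal.ofReal a * κ v + ENNReal.ofReal b * κ w :=
          hκ.2.1 v w a b ha hb hab
      _ ≤ ENNReal.ofReal a * ENNReal.ofReal ‖z - T z‖
            + ENNReal.ofReal b * ENNReal.ofReal ‖z - T z‖ := by
          gcongr
          · exact hv
          · exact hw
      _ = ENNReal.ofReal ‖z - T z‖ := by
          rw [← add_mul, ← ENNReal.ofReal_add ha hb, hab, ENNReal.ofReal_one, one_mul]
  -- A point of `K` closer to `z` would be another minimizer of the objective.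
  have hmin : ∀ w ∈ K, ‖z - T z‖ ≤ ‖z - w‖ := by
    intro w hw
    by_contra! hlt
    have : w = T z := by
      refine (hT z).2 w fun v => le_trans ?_ ((hT z).1 v)
      exact (max_le hw (ENNReal.ofReal_le_ofReal hlt.le)).trans (le_max_right _ _)
    exact absurd hlt (by simp [this])
  have : Nonempty K := ⟨⟨T z, hle⟩⟩
  refine (norm_eq_iInf_iff_real_inner_le_zero hK (show T z ∈ K from hle)).1 ?_ u hu
  refine le_antisymm (le_ciInf fun w => hmin w w.2) ?_
  exact ciInf_le ⟨0, by rintro _ ⟨w, rfl⟩; exact norm_nonneg _⟩ (⟨T z, hle⟩ : K)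

/-- At a fixed point `T (x, 1)` lies vertically below `(x, 1)`; the downward direction comes from
the obtuse-angle inequality at `0`. -/
lemma fix_data {κ : WithLp 2 (X × ℝ) → ℝ≥0∞} (hκ : IsClosedGauge κ)
    {T : WithLp 2 (X × ℝ) → WithLp 2 (X × ℝ)} (hT : IsPolarProx κ T) {x : X}
    (hfix : PS (T (pt x 1)) = pt x 1) :
    fstE (T (pt x 1)) = x ∧ sndE (T (pt x 1)) = 1 - ‖pt x 1 - T (pt x 1)‖ := by
  have h1 : fstE (T (pt x 1)) = x := congrArg fstE hfix
  refine ⟨h1, ?_⟩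
  have hn := norm_sq_E (pt x 1 - T (pt x 1))
  have hi := obtuse_angle hκ hT (pt x 1) (u := 0) (by simp [hκ.map_zero])
  rw [zero_sub, inner_neg_right, prodInner_eq] at hi
  simp only [fstE_sub, sndE_sub, fstE_pt, sndE_pt, h1, sub_self, inner_zero_left, zero_add,
    norm_zero] at hn hi
  have h2 : 0 ≤ 1 - sndE (T (pt x 1)) := by nlinarith
  have := (sq_eq_sq₀ (norm_nonneg _) h2).1 (by simpa using hn)
  linarith

/-- The supporting-hyperplane inequality at a fixed point, rescaled to every sublevel set of `κ`. -/
lemma slope_bound {κ : WithLp 2 (X × ℝ) → ℝ≥0∞} (hκ : IsClosedGauge κ)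
    {T : WithLp 2 (X × ℝ) → WithLp 2 (X × ℝ)} (hT : IsPolarProx κ T) {x : X}
    (hfix : PS (T (pt x 1)) = pt x 1) {r : ℝ} (hr : r = ‖pt x 1 - T (pt x 1)‖)
    {u : WithLp 2 (X × ℝ)} {s : ℝ} (hs : 0 ≤ s) (hu : κ u ≤ ENNReal.ofReal s) :
    r * sndE u ≤ (1 - r) * s := by
  obtain ⟨h1, h2⟩ := fix_data hκ hT hfix
  rw [← hr] at h2
  have hr0 : 0 ≤ r := hr ▸ norm_nonneg _
  have key : ∀ v, κ v ≤ ENNReal.ofReal r → r * sndE v ≤ r * (1 - r) := by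
    intro v hv
    have hi := obtuse_angle hκ hT (pt x 1) (hr ▸ hv)
    rw [prodInner_eq] at hi
    simp only [fstE_sub, sndE_sub, fstE_pt, sndE_pt, h1, h2, sub_self, inner_zero_left, zero_add]
      at hi
    linarith
  have scaled : ∀ s' : ℝ, 0 < s' → s ≤ s' → r * (r * sndE u) ≤ r * ((1 - r) * s') := by
    intro s' hs' hss
    have hv := key ((r / s') • u) (by
      rw [hκ.2.2 _ (by positivity)]
      calc _ ≤ ENNReal.ofReal (r / s') * ENNReal.ofReal s' := by
            gcongr
            exact hu.trans (ENNReal.ofReal_le_ofReal hss)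
        _ = ENNReal.ofReal r := by
            rw [← ENNReal.ofReal_mul (by positivity), div_mul_cancel₀ _ hs'.ne'])
    rw [sndE_smul] at hv
    calc r * (r * sndE u) = (r * (r / s' * sndE u)) * s' := by field_simp
      _ ≤ r * (1 - r) * s' := by gcongr
      _ = _ := by ring
  rcases hr0.eq_or_lt with h0 | hpos
  · simp [← h0, hs]
  -- Rescaling needs a positive level and `s` may be `0`, so let levels `s' > s` decrease to `s`.
  have hlim : Tendsto (fun s' : ℝ => (1 - r) * s') (𝓝[>] s) (𝓝 ((1 - r) * s)) :=
    (Continuous.tendsto (by fun_prop) s).mono_left nhdsWithin_le_nhds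
  refine ge_of_tendsto hlim ?_
  filter_upwards [self_mem_nhdsWithin] with s' hs'
  have hs' : s < s' := hs'
  exact le_of_mul_le_mul_left (scaled s' (hs.trans_lt hs') hs'.le) hpos

/-- The one-sided comparison of displacements at two fixed points. -/
lemma displacement_le {κ : WithLp 2 (X × ℝ) → ℝ≥0∞} (hκ : IsClosedGauge κ)
    {T : WithLp 2 (X × ℝ) → WithLp 2 (X × ℝ)} (hT : IsPolarProx κ T) {x y : X}
    (hx : PS (T (pt x 1)) = pt x 1) (hy : PS (T (pt y 1)) = pt y 1) :
    ‖pt x 1 - T (pt x 1)‖ ≤ ‖pt y 1 - T (pt y 1)‖ := by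
  have h := slope_bound hκ hT hx rfl (norm_nonneg _) (kappa_T_le hκ hT (pt y 1))
  rw [(fix_data hκ hT hy).2] at h
  linarith

lemma fix_of_displacement_eq {κ : WithLp 2 (X × ℝ) → ℝ≥0∞} (hκ : IsClosedGauge κ)
    {T : WithLp 2 (X × ℝ) → WithLp 2 (X × ℝ)} (hT : IsPolarProx κ T) {x u : X}
    (hx : PS (T (pt x 1)) = pt x 1)
    (hu : ‖pt u 1 - T (pt u 1)‖ = ‖pt x 1 - T (pt x 1)‖) :
    PS (T (pt u 1)) = pt u 1 := by
  have hb := slope_bound hκ hT hx hu (norm_nonneg _) (kappa_T_le hκ hT (pt u 1))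
  have hn := norm_sq_E (pt u 1 - T (pt u 1))
  have hr0 := norm_nonneg (pt u 1 - T (pt u 1))
  generalize ‖pt u 1 - T (pt u 1)‖ = r at hb hn hr0
  simp only [fstE_sub, sndE_sub, fstE_pt, sndE_pt] at hn
  have hsq : r ^ 2 ≤ (1 - sndE (T (pt u 1))) ^ 2 := by
    rcases hr0.eq_or_lt with h0 | hpos
    · rw [← h0]; nlinarith [sq_nonneg (1 - sndE (T (pt u 1)))]
    · have : sndE (T (pt u 1)) ≤ 1 - r := by
        rw [mul_comm (1 - r)] at hb
        exact le_of_mul_le_mul_left hb hpos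
      nlinarith
  have h0 : ‖u - fstE (T (pt u 1))‖ = 0 := by
    have : ‖u - fstE (T (pt u 1))‖ ^ 2 ≤ 0 := by linarith
    exact pow_eq_zero_iff two_ne_zero |>.1 (le_antisymm this (sq_nonneg _))
  have h1 := sub_eq_zero.1 (norm_eq_zero.1 h0)
  rw [PS, ← h1]

/-- If `(x,1) ∈ Fix (P_S ∘ T)` and `r' = ‖(x,1) − T(x,1)‖`, then
`Fix (P_S ∘ T) = {(u,1) : ‖T(u,1) − (u,1)‖ = r'}`; in particular `‖T z − z‖ = r'`
for every `z ∈ Fix (P_S ∘ T)`. -/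
theorem fix_PS_comp_polarProx_characterization
    (κ : WithLp 2 (X × ℝ) → ℝ≥0∞) (hκ : IsClosedGauge κ)
    (T : WithLp 2 (X × ℝ) → WithLp 2 (X × ℝ)) (hT : IsPolarProx κ T)
    (x : X) (hfix : PS (T (pt x 1)) = pt x 1)
    (r' : ℝ) (hr' : r' = ‖pt x 1 - T (pt x 1)‖) :
    {z : WithLp 2 (X × ℝ) | PS (T z) = z} =
      {z : WithLp 2 (X × ℝ) | ∃ u : X, z = pt u 1 ∧ ‖T (pt u 1) - pt u 1‖ = r'} ∧
    ∀ z : WithLp 2 (X × ℝ), PS (T z) = z → ‖T z - z‖ = r' := by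
  have hform : ∀ z : WithLp 2 (X × ℝ), PS (T z) = z → ∃ u : X, z = pt u 1 :=
    fun z hz => ⟨_, hz.symm⟩
  have hdisp : ∀ z : WithLp 2 (X × ℝ), PS (T z) = z → ‖T z - z‖ = r' := by
    intro z hz
    obtain ⟨u, rfl⟩ := hform z hz
    rw [norm_sub_rev, hr']
    exact le_antisymm (displacement_le hκ hT hz hfix) (displacement_le hκ hT hfix hz)
  refine ⟨Set.ext fun z => ⟨fun hz => ?_, ?_⟩, hdisp⟩
  · obtain ⟨u, rfl⟩ := hform z hz
    exact ⟨u, rfl, hdisp _ hz⟩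
  · rintro ⟨u, rfl, hu⟩
    exact fix_of_displacement_eq hκ hT hfix (by rw [norm_sub_rev, hu, hr'])
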